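/- Let m, n be positive integers, Ω : Matrix (Fin n) (Fin n) ℂ Hermitian (Ωᴴ = Ω), C : Matrix (Fin m) (Fin n) ℂ, and S : Matrix (Fin m) (Fin m) ℂ unitary (Sᴴ * S = 1 = S * Sᴴ). Set A := -Complex.I • Ω - (1/2 : ℂ) • (Cᴴ * C). Then for every real ω such that (Complex.I * ω) • 1 - A is invertible, the transfer-function matrix G ω := S - C * ((Complex.I * ω) • 1 - A)⁻¹ * Cᴴ * S is unitary, i.e. (G ω) * (G ω)ᴴ = 1 and (G ω)ᴴ * (G ω) = 1. -/

import Mathlib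

open scoped Matrix

/-!
If `M + N = V * U`, then `M⁻¹ + N⁻¹ = M⁻¹ * (M + N) * N⁻¹` makes the cross term of
`(1 - U * M⁻¹ * V) * (1 - U * N⁻¹ * V)` cancel the two linear terms, so this product is `1`.
For `M = iω - A` and `N = Mᴴ`, the Hamiltonian and the frequency are both skew-adjoint contributions
to `M` and disappear from `M + Mᴴ`, which leaves the damping `Cᴴ * C`.
-/

section

variable {m n R : Type*} [Fintype m] [Ring R]

section Drift

variable [StarRing R] [Algebra ℂ R]

/-- The matrix `A = -iΩ - ½CᴴC` of the passive linear system with Hamiltonian matrix `Ω` and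
coupling matrix `C`. Entries in a complex star algebra, such as the bounded operators on a Hilbert
space, allow each mode and channel to be infinite-dimensional. -/
noncomputable def passiveDrift (Ω : Matrix n n R) (C : Matrix m n R) : Matrix n n R :=
  -Complex.I • Ω - (1 / 2 : ℂ) • (Cᴴ * C)

variable [StarModule ℂ R]

theorem passiveDrift_add_conjTranspose {Ω : Matrix n n R} (hΩ : Ω.IsHermitian)
    (C : Matrix m n R) : passiveDrift Ω C + (passiveDrift Ω C)ᴴ = -(Cᴴ * C) := by
  have adjoint_eq : (passiveDrift Ω C)ᴴ = Complex.I • Ω - (1 / 2 : ℂ) • (Cᴴ * C) := by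
    simp [passiveDrift, Matrix.conjTranspose_smul, hΩ.eq]
  rw [adjoint_eq, passiveDrift]
  module

theorem I_mul_smul_one_sub_add_conjTranspose [DecidableEq n] (A : Matrix n n R) (ω : ℝ) :
    ((Complex.I * ω) • 1 - A) + ((Complex.I * ω) • 1 - A)ᴴ = -(A + Aᴴ) := by
  have adjoint_eq : ((Complex.I * ω) • 1 - A)ᴴ = -(Complex.I * ω) • 1 - Aᴴ := by
    simp [Matrix.conjTranspose_smul]
  rw [adjoint_eq]
  module

end Drift

variable [DecidableEq m] [Fintype n] [DecidableEq n]

theorem one_sub_mul_invOf_mul_mul_eq_one {M N : Matrix n n R} [Invertible M] [Invertible N]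
    {U : Matrix m n R} {V : Matrix n m R} (h : M + N = V * U) :
    (1 - U * ⅟M * V) * (1 - U * ⅟N * V) = 1 := by
  have cross : U * ⅟M * V * (U * ⅟N * V) = U * ⅟M * V + U * ⅟N * V := calc
    U * ⅟M * V * (U * ⅟N * V) = U * (⅟M * (V * U) * ⅟N) * V := by simp only [Matrix.mul_assoc]
    _ = U * (⅟M + ⅟N) * V := by rw [← h, invOf_add_invOf]
    _ = U * ⅟M * V + U * ⅟N * V := by rw [Matrix.mul_add, Matrix.add_mul]
  rw [mul_sub, mul_one, sub_mul, one_mul, cross]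
  abel

variable [StarRing R]

theorem one_sub_mul_invOf_mul_conjTranspose_mem_unitary {M : Matrix n n R} [Invertible M]
    {C : Matrix m n R} (h : M + Mᴴ = Cᴴ * C) :
    1 - C * ⅟M * Cᴴ ∈ unitary (Matrix m m R) := by
  have star_eq : star (1 - C * ⅟M * Cᴴ) = 1 - C * ⅟(star M) * Cᴴ := by
    rw [← star_invOf]
    simp [Matrix.star_eq_conjTranspose, Matrix.mul_assoc]
  rw [Unitary.mem_iff, star_eq]
  exact ⟨one_sub_mul_invOf_mul_mul_eq_one ((add_comm _ _).trans h),
    one_sub_mul_invOf_mul_mul_eq_one h⟩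

theorem transfer_function_unitary_general [Algebra ℂ R] [StarModule ℂ R]
    {Ω : Matrix n n R} (hΩ : Ω.IsHermitian)
    (C : Matrix m n R) {S : Matrix m m R} (hS : S ∈ unitary (Matrix m m R)) (ω : ℝ)
    [Invertible ((Complex.I * ω) • 1 - passiveDrift Ω C)] :
    S - C * ⅟((Complex.I * ω) • 1 - passiveDrift Ω C) * Cᴴ * S ∈ unitary (Matrix m m R) := by
  rw [← one_sub_mul]
  refine mul_mem (one_sub_mul_invOf_mul_conjTranspose_mem_unitary ?_) hS
  rw [I_mul_smul_one_sub_add_conjTranspose, passiveDrift_add_conjTranspose hΩ, neg_neg]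

end

/-- **Unitarity of the transfer function of a passive quantum linear system.**
For a passive quantum linear system with Hermitian Hamiltonian matrix `Ω`, coupling
matrix `C`, unitary scattering matrix `S` and `A = -iΩ - (1/2)CᴴC`, the transfer
function `G ω = S - C((iω)·1 - A)⁻¹CᴴS` is unitary at every real frequency `ω` at
which `(iω)·1 - A` is invertible. -/
theorem transfer_function_unitary
    (m n : ℕ) (hm : 0 < m) (hn : 0 < n)
    (Ω : Matrix (Fin n) (Fin n) ℂ) (hΩ : Ωᴴ = Ω)
    (C : Matrix (Fin m) (Fin n) ℂ)
    (S : Matrix (Fin m) (Fin m) ℂ) (hS₁ : Sᴴ * S = 1) (hS₂ : S * Sᴴ = 1)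
    (A : Matrix (Fin n) (Fin n) ℂ)
    (hA : A = -Complex.I • Ω - (1/2 : ℂ) • (Cᴴ * C))
    (G : ℝ → Matrix (Fin m) (Fin m) ℂ)
    (hG : ∀ ω : ℝ,
      G ω = S - C * ((Complex.I * (ω : ℂ)) • (1 : Matrix (Fin n) (Fin n) ℂ) - A)⁻¹ * Cᴴ * S) :
    ∀ ω : ℝ,
      IsUnit ((Complex.I * (ω : ℂ)) • (1 : Matrix (Fin n) (Fin n) ℂ) - A) →
      (G ω) * (G ω)ᴴ = 1 ∧ (G ω)ᴴ * (G ω) = 1 := by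
  obtain rfl : A = passiveDrift Ω C := hA
  intro ω hU
  have := hU.invertible
  rw [hG, ← Matrix.invOf_eq_nonsing_inv]
  exact (Unitary.mem_iff.mp
    (transfer_function_unitary_general hΩ C (Unitary.mem_iff.mpr ⟨hS₁, hS₂⟩) ω)).symm
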